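/- arXiv:2003.03656 — 3 statements merged into one kernel-verified Lean document; each statement's English description precedes it below -/
import Mathlib

section
/- There exists an absolute constant c > 0 such that for every finite field F with q elements and every subset P ⊆ F² with |P| ≥ 4q, the number of collinear triples contained in P is at least c|P|³/q. -/
/-!
Fix a point `a` of a finite set `S` in an affine space. A point `b ≠ a` determines a direction, a
point of the projective space `ℙ F V`, and two points in the same direction from `a` are collinear
with `a`. By Cauchy–Schwarz at least `(|S| - 1)² / |ℙ F V|` ordered pairs of points of `S \ {a}`
agree in direction, and only `|S| - 1` of these pairs are diagonal. Summing over `a` counts every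
collinear triple six times. In dimension `d + 1` over a field with `q` elements, `|ℙ F V|` is at
most `2 q ^ d`, so once `|S| ≥ 4 q ^ d` the diagonal pairs make up at most about half of the total.
-/

open Finset MeasureTheory
open scoped NNReal ENNReal

/-- A set `P` in the affine plane over `F` is an arc if it contains no three
distinct collinear points. -/
def IsArc (F : Type*) [Field F] (P : Set (F × F)) : Prop :=
  ∀ a ∈ P, ∀ b ∈ P, ∀ c ∈ P,
    a ≠ b → a ≠ c → b ≠ c → ¬ Collinear F ({a, b, c} : Set (F × F))

/-- `numArcs F k` is the number of `k`-element arcs in `F²`. -/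
noncomputable def numArcs (F : Type*) [Field F] [Fintype F] (k : ℕ) : ℕ :=
  Nat.card {s : Finset (F × F) // s.card = k ∧ IsArc F ↑s}

/-- `maxArc F P` is the maximum cardinality of an arc contained in `P`. -/
noncomputable def maxArc (F : Type*) [Field F] (P : Finset (F × F)) : ℕ :=
  sSup {k : ℕ | ∃ s : Finset (F × F), s ⊆ P ∧ s.card = k ∧ IsArc F ↑s}

/-- `numCollinearTriples F P` is the number of 3-element collinear subsets of `P`. -/
noncomputable def numCollinearTriples (F : Type*) [Field F] (P : Finset (F × F)) : ℕ :=
  Nat.card {s : Finset (F × F) // s ⊆ P ∧ s.card = 3 ∧ Collinear F (↑s : Set (F × F))}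

/-- `P` contains no `l` distinct collinear points. -/
def NoLCollinear (F : Type*) [Field F] (l : ℕ) (P : Finset (F × F)) : Prop :=
  ∀ s : Finset (F × F), s ⊆ P → s.card = l → ¬ Collinear F (↑s : Set (F × F))

/-- The product Bernoulli(p) measure on subsets of `F²` (encoded as functions
`F × F → Bool`): each point is included independently with probability `p`. -/
noncomputable def randomMeasure (F : Type*) [Field F] [Fintype F] (p : ℝ≥0) (hp : p ≤ 1) :
    Measure ((F × F) → Bool) :=
  Measure.pi fun _ => (PMF.bernoulli p (by exact_mod_cast hp)).toMeasure

/-- The subset of `F²` corresponding to an indicator function `Q : F × F → Bool`. -/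
noncomputable def toSubset {F : Type*} [Field F] [Fintype F] (Q : (F × F) → Bool) :
    Finset (F × F) := Finset.univ.filter fun x => Q x = true

/-- `L` is an affine line in `F²`, i.e. the affine span of two distinct points. -/
def IsAffineLine (F : Type*) [Field F] (L : Set (F × F)) : Prop :=
  ∃ a b : F × F, a ≠ b ∧ L = (affineSpan F {a, b} : Set (F × F))

open scoped LinearAlgebra.Projectivization

section Collisions

variable {α β : Type*} [DecidableEq β]

lemma sum_sq_card_fiber_eq [Fintype β] (s : Finset α) (f : α → β) :
    ∑ d, #{x ∈ s | f x = d} ^ 2 = #{x ∈ s.offDiag | f x.1 = f x.2} + #s := by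
  have fiber_sq (d : β) : #{x ∈ s | f x = d} ^ 2 =
      #{x ∈ s.offDiag | f x.1 = f x.2 ∧ f x.1 = d} + #{x ∈ s | f x = d} := by
    have offDiag_fiber : {x ∈ s.offDiag | f x.1 = f x.2 ∧ f x.1 = d} =
        Finset.offDiag {x ∈ s | f x = d} := by
      ext x
      simp only [mem_filter, mem_offDiag]
      grind
    rw [offDiag_fiber, offDiag_card, sq, Nat.sub_add_cancel (Nat.le_mul_self _)]
  simp_rw [fiber_sq, sum_add_distrib, ← filter_filter]
  rw [← card_eq_sum_card_fiberwise fun _ _ => mem_coe.2 (mem_univ _),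
    ← card_eq_sum_card_fiberwise fun _ _ => mem_coe.2 (mem_univ _)]

lemma sq_card_le_card_mul_card_collisions_add_card [Finite β] (s : Finset α) (f : α → β) :
    #s ^ 2 ≤ Nat.card β * (#{x ∈ s.offDiag | f x.1 = f x.2} + #s) := by
  have : Fintype β := Fintype.ofFinite β
  calc #s ^ 2 = (∑ d, #{x ∈ s | f x = d}) ^ 2 := by
        rw [← card_eq_sum_card_fiberwise fun _ _ => mem_coe.2 (mem_univ _)]
    _ ≤ Fintype.card β * ∑ d, #{x ∈ s | f x = d} ^ 2 := sq_sum_le_card_mul_sum_sq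
    _ = Nat.card β * (#{x ∈ s.offDiag | f x.1 = f x.2} + #s) := by
        rw [sum_sq_card_fiber_eq, Nat.card_eq_fintype_card]

end Collisions

section CollinearTriples

variable (F : Type*) {V A : Type*} [DivisionRing F] [AddCommGroup V] [Module F V] [AddTorsor V A]

/-- The direction of the line through `a` and `b`, as a point of projective space. The point `b`
ranges over the subtype of points other than `a`, so that no value at `a` has to be chosen. -/
def direction (a : A) (b : {b : A // b ≠ a}) : ℙ F V :=
  .mk F (b.1 -ᵥ a) (vsub_ne_zero.2 b.2)

open Classical in
/-- The collinear triples of `S`, as 3-element subsets. -/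
noncomputable def collinearTriples (S : Finset A) : Finset (Finset A) :=
  {t ∈ S.powersetCard 3 | Collinear F (t : Set A)}

open Classical in
/-- The ordered pairs of distinct points of `S \ {a}` that lie in the same direction from `a`. -/
noncomputable def alignedPairs (S : Finset A) (a : A) :
    Finset ({b : A // b ≠ a} × {b : A // b ≠ a}) :=
  {x ∈ (S.subtype (· ≠ a)).offDiag | direction F a x.1 = direction F a x.2}

variable {F}

lemma mem_collinearTriples {S t : Finset A} :
    t ∈ collinearTriples F S ↔ t ⊆ S ∧ #t = 3 ∧ Collinear F (t : Set A) := by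
  simp only [collinearTriples, mem_filter, mem_powersetCard, and_assoc]

lemma mem_alignedPairs {S : Finset A} {a : A} {x : {b : A // b ≠ a} × {b : A // b ≠ a}} :
    x ∈ alignedPairs F S a ↔
      (x.1.1 ∈ S ∧ x.2.1 ∈ S ∧ x.1 ≠ x.2) ∧ direction F a x.1 = direction F a x.2 := by
  simp only [alignedPairs, mem_filter, mem_offDiag, mem_subtype]

lemma collinear_of_direction_eq {a : A} {b c : {b : A // b ≠ a}}
    (h : direction F a b = direction F a c) : Collinear F {a, b.1, c.1} := by
  obtain ⟨r, hr⟩ := (Projectivization.mk_eq_mk_iff' F _ _ _ _).1 h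
  rw [collinear_iff_of_mem (Set.mem_insert a _)]
  refine ⟨c.1 -ᵥ a, ?_⟩
  rintro p (rfl | rfl | rfl)
  · exact ⟨0, by simp⟩
  · exact ⟨r, by simp [hr]⟩
  · exact ⟨1, by simp⟩

open Classical in
lemma insert_pair_mem_collinearTriples {S : Finset A} {a : A} (ha : a ∈ S)
    {x : {b : A // b ≠ a} × {b : A // b ≠ a}} (hx : x ∈ alignedPairs F S a) :
    {a, x.1.1, x.2.1} ∈ collinearTriples F S := by
  obtain ⟨⟨hb, hc, hbc⟩, hdir⟩ := mem_alignedPairs.1 hx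
  refine mem_collinearTriples.2 ⟨by grind, ?_, ?_⟩
  · exact card_eq_three.2
      ⟨_, _, _, x.1.2.symm, x.2.2.symm, Subtype.coe_injective.ne hbc, rfl⟩
  · simpa using collinear_of_direction_eq hdir

open Classical in
lemma card_alignedPairs_insert_pair_eq_le {S t : Finset A} {a : A} (hcard : #t = 3) (hat : a ∈ t) :
    #{x ∈ alignedPairs F S a | {a, x.1.1, x.2.1} = t} ≤ 2 := by
  have card_pairs : #(t.erase a).offDiag = 2 := by
    rw [offDiag_card, card_erase_of_mem hat, hcard]
  refine (card_le_card_of_injOn (Prod.map Subtype.val Subtype.val) (fun x hx => ?_)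
    (Subtype.val_injective.prodMap Subtype.val_injective).injOn).trans_eq card_pairs
  obtain ⟨hx, hxt⟩ := mem_filter.1 hx
  have hne : x.1.1 ≠ x.2.1 := Subtype.coe_injective.ne (mem_alignedPairs.1 hx).1.2.2
  simp [← hxt, x.1.2, x.2.2, hne]

open Classical in
lemma card_alignedPairs_le {S : Finset A} {a : A} (ha : a ∈ S) :
    #(alignedPairs F S a) ≤ 2 * #{t ∈ collinearTriples F S | a ∈ t} := by
  refine card_le_mul_card_image_of_maps_to
    (fun x hx => mem_filter.2 ⟨insert_pair_mem_collinearTriples ha hx, mem_insert_self a _⟩) 2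
    fun t ht => ?_
  obtain ⟨ht, hat⟩ := mem_filter.1 ht
  exact card_alignedPairs_insert_pair_eq_le (mem_collinearTriples.1 ht).2.1 hat

open Classical in
lemma sum_card_collinearTriples_through (S : Finset A) :
    ∑ a ∈ S, #{t ∈ collinearTriples F S | a ∈ t} = 3 * #(collinearTriples F S) := by
  have inter_card : ∀ t ∈ collinearTriples F S, #{a ∈ S | a ∈ t} = 3 := fun t ht => by
    obtain ⟨hsub, hcard, -⟩ := mem_collinearTriples.1 ht
    rw [filter_mem_eq_inter, inter_eq_right.2 hsub, hcard]
  calc ∑ a ∈ S, #{t ∈ collinearTriples F S | a ∈ t}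
      = ∑ t ∈ collinearTriples F S, #{a ∈ S | a ∈ t} :=
        sum_card_bipartiteAbove_eq_sum_card_bipartiteBelow (· ∈ ·)
    _ = 3 * #(collinearTriples F S) := by
        rw [sum_const_nat inter_card, mul_comm]

lemma sum_card_alignedPairs_le (S : Finset A) :
    ∑ a ∈ S, #(alignedPairs F S a) ≤ 6 * #(collinearTriples F S) := by
  classical
  calc ∑ a ∈ S, #(alignedPairs F S a)
      ≤ ∑ a ∈ S, 2 * #{t ∈ collinearTriples F S | a ∈ t} :=
        sum_le_sum fun _ => card_alignedPairs_le
    _ = 6 * #(collinearTriples F S) := by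
        rw [← mul_sum, sum_card_collinearTriples_through]
        ring

variable [Finite (ℙ F V)]

lemma sq_card_sub_one_le_mul_card_alignedPairs {S : Finset A} {a : A} (ha : a ∈ S) :
    (#S - 1) ^ 2 ≤ Nat.card (ℙ F V) * (#(alignedPairs F S a) + (#S - 1)) := by
  classical
  have card_others : #(S.subtype (· ≠ a)) = #S - 1 := by
    rw [card_subtype, filter_ne', card_erase_of_mem ha]
  simpa only [card_others, alignedPairs] using
    sq_card_le_card_mul_card_collisions_add_card (S.subtype (· ≠ a)) (direction F a)

lemma card_mul_sq_le_mul_card_collinearTriples (S : Finset A) :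
    #S * (#S - 1) ^ 2 ≤
      Nat.card (ℙ F V) * (6 * #(collinearTriples F S) + #S * (#S - 1)) := by
  calc #S * (#S - 1) ^ 2
      ≤ ∑ a ∈ S, Nat.card (ℙ F V) * (#(alignedPairs F S a) + (#S - 1)) :=
        card_nsmul_le_sum _ _ _ fun _ => sq_card_sub_one_le_mul_card_alignedPairs
    _ = Nat.card (ℙ F V) * (∑ a ∈ S, #(alignedPairs F S a) + #S * (#S - 1)) := by
        rw [← mul_sum, sum_add_distrib, sum_const, smul_eq_mul]
    _ ≤ Nat.card (ℙ F V) * (6 * #(collinearTriples F S) + #S * (#S - 1)) := by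
        gcongr
        exact sum_card_alignedPairs_le S

lemma card_pow_three_le_mul_card_collinearTriples {S : Finset A} (h3 : 3 ≤ #S)
    (hS : 2 * Nat.card (ℙ F V) ≤ #S) :
    #S ^ 3 ≤ 54 * (Nat.card (ℙ F V) * #(collinearTriples F S)) := by
  have hcount := card_mul_sq_le_mul_card_collinearTriples (F := F) S
  have hdiag := Nat.mul_le_mul_right (#S * (#S - 1)) hS
  obtain ⟨m, hm⟩ := Nat.exists_eq_add_of_le' h3
  simp only [hm, show m + 3 - 1 = m + 2 from rfl] at hcount hdiag ⊢
  have hprod : (m + 3) * (m + 2) * (m + 1) ≤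
      12 * (Nat.card (ℙ F V) * #(collinearTriples F S)) := by
    linarith
  refine Nat.le_of_mul_le_mul_left (c := 2) ?_ two_pos
  calc 2 * (m + 3) ^ 3 ≤ 9 * ((m + 3) * (m + 2) * (m + 1)) := by nlinarith
    _ ≤ 9 * (12 * (Nat.card (ℙ F V) * #(collinearTriples F S))) := Nat.mul_le_mul_left 9 hprod
    _ = 2 * (54 * (Nat.card (ℙ F V) * #(collinearTriples F S))) := by ring

end CollinearTriples

lemma card_projectivization_le_two_mul_pow {F V : Type*} [Field F] [Finite F] [AddCommGroup V]
    [Module F V] {d : ℕ} (hd : Module.finrank F V = d + 1) :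
    Nat.card (ℙ F V) ≤ 2 * Nat.card F ^ d := by
  have geom_lt : ∑ i ∈ range d, Nat.card F ^ i < Nat.card F ^ d :=
    Nat.geomSum_lt Finite.one_lt_card fun _ => mem_range.1
  rw [Projectivization.card_of_finrank F V hd, sum_range_succ]
  lia

lemma numCollinearTriples_eq_card_collinearTriples {F : Type*} [Field F] (P : Finset (F × F)) :
    numCollinearTriples F P = #(collinearTriples F P) :=
  Nat.subtype_card _ fun _ => mem_collinearTriples

theorem supersaturation_general :
    ∃ c : ℝ, 0 < c ∧ ∀ (F : Type*) [Field F] [Finite F] (V A : Type*) [AddCommGroup V] [Module F V]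
      [AddTorsor V A] (d : ℕ), Module.finrank F V = d + 1 → ∀ S : Finset A,
      4 * Nat.card F ^ d ≤ #S →
      c * (#S : ℝ) ^ 3 / (Nat.card F : ℝ) ^ d ≤ (#(collinearTriples F S) : ℝ) := by
  refine ⟨1 / 108, by norm_num, fun F _ _ V A _ _ _ d hd S hS => ?_⟩
  have : Module.Finite F V := Module.finite_of_finrank_eq_succ hd
  have : Finite V := Module.finite_of_finite F
  have hpow : 0 < Nat.card F ^ d := pow_pos Nat.card_pos d
  have hdir : Nat.card (ℙ F V) ≤ 2 * Nat.card F ^ d := card_projectivization_le_two_mul_pow hd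
  have hcube : #S ^ 3 ≤ 108 * (Nat.card F ^ d * #(collinearTriples F S)) :=
    calc #S ^ 3 ≤ 54 * (Nat.card (ℙ F V) * #(collinearTriples F S)) :=
          card_pow_three_le_mul_card_collinearTriples (by lia) (by lia)
      _ ≤ 54 * (2 * Nat.card F ^ d * #(collinearTriples F S)) := by gcongr
      _ = 108 * (Nat.card F ^ d * #(collinearTriples F S)) := by ring
  have hcube_real : (#S : ℝ) ^ 3 ≤
      108 * ((Nat.card F : ℝ) ^ d * (#(collinearTriples F S) : ℝ)) := by
    exact_mod_cast hcube
  rw [div_le_iff₀ (by exact_mod_cast hpow)]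
  linarith

theorem supersaturation :
    ∃ c : ℝ, 0 < c ∧ ∀ (F : Type) [Field F] [Fintype F], ∀ P : Finset (F × F),
      4 * Fintype.card F ≤ P.card →
      c * (P.card : ℝ) ^ 3 / (Fintype.card F : ℝ) ≤ (numCollinearTriples F P : ℝ) := by
  obtain ⟨c, hc, h⟩ := supersaturation_general
  refine ⟨c, hc, fun F _ _ P hP => ?_⟩
  simpa [numCollinearTriples_eq_card_collinearTriples] using
    h F (F × F) (F × F) 1 (by simp) P (by simpa using hP)
end

section
/- For every δ > 0 there exist a constant c(δ) > 0 and q₀ such that for every prime power q ≥ q₀ and every real t with 1/2 + 2δ ≤ t ≤ 1, there exists a family 𝒞 of subsets of F² satisfying: (i) |𝒞| ≤ 2^{c(δ) · q^{t−δ} · (log₂ q)²}; (ii) every C ∈ 𝒞 has |C| ≤ q^{2−t+3δ}; (iii) every arc P ⊆ F² is contained in some C ∈ 𝒞. -/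
/-!
A single family of `2 ^ O(√q (log q)²)` containers of size `O(q)` serves every exponent `t` in the
range.

Fix `r ≈ √q`. An arc `P` with at least `r` points contains an `r`-point arc `S`. Join two distinct
points of the plane when they are collinear with some point of `S`; then `P \ S` is independent in
this graph. The points of `S` are joined to a set `A` by at most `q + 1` lines each, so by
Cauchy–Schwarz each `s ∈ S` accounts for at least about `|A|² / q` adjacent ordered pairs in `A`.
A pair is counted by at most two elements of `S`, because `S` is an arc. Therefore every `A` of size
at least `2(q + 1)` contains a vertex with at least `r |A| / (4(q + 1))` neighbours in `A`, and the
Kleitman–Winston procedure produces containers of size `O(q)` after selecting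
`O((q / r) log q) = O(√q log q)` points. The choice of `S` costs only a further factor `q ^ (2r)`,
and the arcs with fewer than `r` points are covered by the `r`-point sets.
-/

open Finset MeasureTheory
open scoped NNReal ENNReal

/-- A family of containers for the finite sets satisfying `p`: its members have at most `M`
elements, and each set satisfying `p` lies in one of them. The number of containers is not part of
the notion and is bounded separately. -/
structure IsContainerFamily {V : Type*} (p : Finset V → Prop) (M : ℕ)
    (𝒞 : Finset (Finset V)) : Prop where
  card_le : ∀ C ∈ 𝒞, #C ≤ M
  exists_superset : ∀ I, p I → ∃ C ∈ 𝒞, I ⊆ C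

namespace IsContainerFamily

variable {V : Type*} {p p' : Finset V → Prop} {M M' : ℕ} {𝒞 𝒞' : Finset (Finset V)}

lemma mono (h : IsContainerFamily p M 𝒞) (hp : ∀ I, p' I → p I) (hM : M ≤ M') :
    IsContainerFamily p' M' 𝒞 :=
  ⟨fun C hC ↦ (h.card_le C hC).trans hM, fun I hI ↦ h.exists_superset I (hp I hI)⟩

lemma singleton {A : Finset V} (hp : ∀ I, p I → I ⊆ A) : IsContainerFamily p #A {A} :=
  ⟨by simp, fun I hI ↦ ⟨A, mem_singleton_self A, hp I hI⟩⟩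

lemma powersetCard [Fintype V] {r : ℕ} (hr : r ≤ Fintype.card V) :
    IsContainerFamily (fun I : Finset V ↦ #I ≤ r) r (powersetCard r univ) where
  card_le _ hC := (mem_powersetCard.1 hC).2.le
  exists_superset I hI := by
    obtain ⟨C, hIC, -, hC⟩ := exists_subsuperset_card_eq (subset_univ I) hI hr
    exact ⟨C, mem_powersetCard.2 ⟨subset_univ C, hC⟩, hIC⟩

lemma union [DecidableEq V] (h : IsContainerFamily p M 𝒞) (h' : IsContainerFamily p' M 𝒞') :
    IsContainerFamily (fun I ↦ p I ∨ p' I) M (𝒞 ∪ 𝒞') where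
  card_le C hC := (mem_union.1 hC).elim (h.card_le C) (h'.card_le C)
  exists_superset := by
    rintro I (hI | hI)
    · obtain ⟨C, hC, hIC⟩ := h.exists_superset I hI
      exact ⟨C, mem_union_left _ hC, hIC⟩
    · obtain ⟨C, hC, hIC⟩ := h'.exists_superset I hI
      exact ⟨C, mem_union_right _ hC, hIC⟩

lemma image_union [DecidableEq V] (h : IsContainerFamily p M 𝒞) (S : Finset V) :
    IsContainerFamily (fun I ↦ p (I \ S)) (#S + M) (𝒞.image (S ∪ ·)) where
  card_le := by
    simp only [mem_image]
    rintro _ ⟨C, hC, rfl⟩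
    exact (card_union_le S C).trans (Nat.add_le_add_left (h.card_le C hC) _)
  exists_superset I hI := by
    obtain ⟨C, hC, hIC⟩ := h.exists_superset (I \ S) hI
    exact ⟨S ∪ C, mem_image_of_mem _ hC, sdiff_le_iff.1 hIC⟩

lemma exists_biUnion {ι : Type*} {s : Finset ι} {P : ι → Finset V → Prop} {N : ℕ}
    (h : ∀ i ∈ s, ∃ 𝒞, #𝒞 ≤ N ∧ IsContainerFamily (P i) M 𝒞) :
    ∃ 𝒞, #𝒞 ≤ #s * N ∧ IsContainerFamily (fun I ↦ ∃ i ∈ s, P i I) M 𝒞 := by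
  classical
  choose! f hN hf using h
  refine ⟨s.biUnion f, card_biUnion_le_card_mul s f N hN, fun C hC ↦ ?_, ?_⟩
  · obtain ⟨i, hi, hC⟩ := mem_biUnion.1 hC
    exact (hf i hi).card_le C hC
  · rintro I ⟨i, hi, hI⟩
    obtain ⟨C, hC, hIC⟩ := (hf i hi).exists_superset I hI
    exact ⟨C, mem_biUnion.2 ⟨i, hi, hC⟩, hIC⟩

end IsContainerFamily

section KleitmanWinston

variable {V : Type*} {r : V → V → Prop} [DecidableRel r]

lemma card_filter_not_erase_le [DecidableEq V] {A : Finset V} {v : V} {β : ℝ}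
    (hv : β * #A ≤ #{u ∈ A | r v u}) :
    (#{u ∈ A.erase v | ¬ r v u} : ℝ) ≤ #A * (1 - β) := by
  have hsub : (#{u ∈ A.erase v | ¬ r v u} : ℝ) ≤ #{u ∈ A | ¬ r v u} := mod_cast
    card_le_card (filter_subset_filter _ (erase_subset v A))
  have hadd : (#{u ∈ A | r v u} : ℝ) + #{u ∈ A | ¬ r v u} = #A := mod_cast
    card_filter_add_card_filter_not (s := A) (r v)
  linarith

lemma IsContainerFamily.union_image_insert [DecidableEq V] {A : Finset V} {v : V} {M : ℕ}
    {𝒞 𝒞' : Finset (Finset V)}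
    (h : IsContainerFamily
      (fun I ↦ I ⊆ A.erase v ∧ (I : Set V).Pairwise fun x y ↦ ¬ r x y) (M + 1) 𝒞)
    (h' : IsContainerFamily
      (fun I ↦ I ⊆ {u ∈ A.erase v | ¬ r v u} ∧ (I : Set V).Pairwise fun x y ↦ ¬ r x y) M 𝒞') :
    IsContainerFamily (fun I ↦ I ⊆ A ∧ (I : Set V).Pairwise fun x y ↦ ¬ r x y) (M + 1)
      (𝒞 ∪ 𝒞'.image ({v} ∪ ·)) := by
  refine (h.union ((h'.image_union {v}).mono (fun _ hI ↦ hI) ?_)).mono ?_ le_rfl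
  · rw [card_singleton, add_comm]
  rintro I ⟨hIA, hI⟩
  by_cases hvI : v ∈ I
  · refine Or.inr ⟨fun u hu ↦ ?_, hI.mono (by simp)⟩
    obtain ⟨huI, huv⟩ : u ∈ I ∧ u ≠ v := by simpa using hu
    exact mem_filter.2 ⟨mem_erase.2 ⟨huv, hIA huI⟩, hI hvI huI huv.symm⟩
  · exact Or.inl ⟨subset_erase.2 ⟨hIA, hvI⟩, hI⟩

/-- Here `k` bounds the number of selected vertices: each selection shrinks the set of vertices
that remain available by the factor `1 - β`. -/
lemma exists_isContainerFamily_pairwise_not {β : ℝ} {M : ℕ} (hβ : β ≤ 1) (U : Finset V)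
    (hdeg : ∀ A ⊆ U, M ≤ #A → ∃ v ∈ A, β * #A ≤ #{u ∈ A | r v u})
    (k : ℕ) (hk : #U * (1 - β) ^ k < M) :
    ∃ 𝒞, #𝒞 ≤ (#U + 1) ^ k ∧
      IsContainerFamily (fun I ↦ I ⊆ U ∧ (I : Set V).Pairwise fun x y ↦ ¬ r x y) (M + k) 𝒞 := by
  classical
  induction U using Finset.strongInduction generalizing k with
  | H A ih =>
  by_cases hM : #A < M
  · refine ⟨{A}, by simpa using Nat.one_le_pow _ _ (Nat.succ_pos _), ?_⟩
    exact (IsContainerFamily.singleton fun _ hI ↦ hI.1).mono (fun _ hI ↦ hI) (by omega)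
  obtain ⟨v, hvA, hv⟩ := hdeg A subset_rfl (not_lt.1 hM)
  obtain _ | k := k
  · exact absurd (mod_cast by simpa using hk) hM
  set D : Finset V := {u ∈ A.erase v | ¬ r v u}
  have : 0 ≤ 1 - β := sub_nonneg.2 hβ
  have hA : #(A.erase v) + 1 = #A := card_erase_add_one hvA
  have hDA : #D ≤ #(A.erase v) := card_le_card (filter_subset _ _)
  have hDss : D ⊂ A := (filter_subset _ _).trans_ssubset (erase_ssubset hvA)
  have hAk : #(A.erase v) * (1 - β) ^ (k + 1) < M :=
    lt_of_le_of_lt (by gcongr; exact erase_subset v A) hk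
  have hDk : #D * (1 - β) ^ k < M :=
    calc (#D : ℝ) * (1 - β) ^ k ≤ #A * (1 - β) * (1 - β) ^ k := by
          gcongr; exact card_filter_not_erase_le hv
      _ = #A * (1 - β) ^ (k + 1) := by ring
      _ < M := hk
  obtain ⟨𝒞, hcard, h𝒞⟩ := ih (A.erase v) (erase_ssubset hvA)
    (fun B hB ↦ hdeg B (hB.trans (erase_subset v A))) (k + 1) hAk
  obtain ⟨𝒞', hcard', h𝒞'⟩ := ih D hDss (fun B hB ↦ hdeg B (hB.trans hDss.subset)) k hDk
  refine ⟨𝒞 ∪ 𝒞'.image ({v} ∪ ·), ?_, h𝒞.union_image_insert h𝒞'⟩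
  calc #(𝒞 ∪ 𝒞'.image ({v} ∪ ·))
      ≤ #𝒞 + #𝒞' := (card_union_le _ _).trans (Nat.add_le_add_left card_image_le _)
    _ ≤ #A ^ (k + 1) + #A ^ k := by
        rw [hA] at hcard
        gcongr
        exact hcard'.trans (Nat.pow_le_pow_left (by omega) k)
    _ = #A ^ k * (#A + 1) := by ring
    _ ≤ (#A + 1) ^ k * (#A + 1) := by gcongr; omega
    _ = (#A + 1) ^ (k + 1) := (pow_succ _ _).symm

end KleitmanWinston

lemma sq_card_le_card_image_mul {α β : Type*} [DecidableEq β] (f : α → β) (A : Finset α) :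
    #A ^ 2 ≤ #(A.image f) * #{x ∈ A ×ˢ A | f x.1 = f x.2} := by
  have hfiber (b : β) :
      #{x ∈ {x ∈ A ×ˢ A | f x.1 = f x.2} | f x.1 = b} = #{a ∈ A | f a = b} ^ 2 := by
    rw [sq, ← card_product]
    congr 1
    ext x
    simp only [mem_filter, mem_product]
    grind
  calc #A ^ 2 = (∑ b ∈ A.image f, #{a ∈ A | f a = b}) ^ 2 := by
        rw [← card_eq_sum_card_image]
    _ ≤ #(A.image f) * ∑ b ∈ A.image f, #{a ∈ A | f a = b} ^ 2 := sq_sum_le_card_mul_sum_sq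
    _ = #(A.image f) * #{x ∈ A ×ˢ A | f x.1 = f x.2} := by
        rw [card_eq_sum_card_fiberwise (f := fun x : α × α ↦ f x.1) (t := A.image f)]
        · simp only [hfiber]
        · intro x hx
          simp only [coe_filter, mem_product, Set.mem_ofPred_eq] at hx
          exact mem_image_of_mem f hx.1.1

section AffineSpace

open scoped LinearAlgebra.Projectivization

variable {k V P : Type*} [DivisionRing k] [AddCommGroup V] [Module k V] [AddTorsor V P]

lemma collinear_of_span_singleton_vsub_eq {s x y : P} (h : k ∙ (x -ᵥ s) = k ∙ (y -ᵥ s)) :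
    Collinear k {s, x, y} := by
  obtain ⟨c, hc⟩ : ∃ c : k, c • (x -ᵥ s) = y -ᵥ s :=
    Submodule.mem_span_singleton.1 (h ▸ Submodule.mem_span_singleton_self _)
  rw [collinear_iff_of_mem (p₀ := s) (by simp)]
  refine ⟨x -ᵥ s, ?_⟩
  rintro z (rfl | rfl | rfl)
  · exact ⟨0, by simp⟩
  · exact ⟨1, by simp⟩
  · exact ⟨c, by simp [hc]⟩

open scoped Classical in
lemma card_image_span_singleton_vsub_le [Finite V] {s : P} {A : Finset P} (hs : s ∉ A) :
    #(A.image fun x ↦ k ∙ (x -ᵥ s)) ≤ Nat.card (ℙ k V) := by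
  have := Fintype.ofFinite (ℙ k V)
  have hsub : (A.image fun x ↦ k ∙ (x -ᵥ s)) ⊆
      univ.image (Projectivization.submodule : ℙ k V → Submodule k V) := by
    refine image_subset_iff.2 fun x hx ↦ mem_image.2 ?_
    have hxs : x -ᵥ s ≠ 0 := vsub_ne_zero.2 fun h ↦ hs (h ▸ hx)
    exact ⟨.mk k (x -ᵥ s) hxs, mem_univ _, Projectivization.submodule_mk _ hxs⟩
  calc #(A.image fun x ↦ k ∙ (x -ᵥ s)) ≤ #(univ : Finset (ℙ k V)) :=
        (card_le_card hsub).trans card_image_le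
    _ = Nat.card (ℙ k V) := by rw [card_univ, Nat.card_eq_fintype_card]

open scoped Classical in
lemma sq_card_le_mul_card_collinear [Finite V] {s : P} {A : Finset P} (hs : s ∉ A) :
    #A ^ 2 ≤ Nat.card (ℙ k V) * #{x ∈ A ×ˢ A | Collinear k {s, x.1, x.2}} := by
  refine (sq_card_le_card_image_mul (fun x ↦ k ∙ (x -ᵥ s)) A).trans
    (Nat.mul_le_mul (card_image_span_singleton_vsub_le hs) (card_le_card ?_))
  exact monotone_filter_right _ fun _ _ ↦ collinear_of_span_singleton_vsub_eq

open scoped Classical in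
lemma sq_card_le_two_mul_card_offDiag_collinear [Finite V] {s : P} {A : Finset P} (hs : s ∉ A)
    (hA : 2 * Nat.card (ℙ k V) ≤ #A) :
    #A ^ 2 ≤ 2 * Nat.card (ℙ k V) * #{x ∈ A.offDiag | Collinear k {s, x.1, x.2}} := by
  have hdiag : #{x ∈ A ×ˢ A | Collinear k {s, x.1, x.2}} ≤
      #A + #{x ∈ A.offDiag | Collinear k {s, x.1, x.2}} := by
    rw [← diag_union_offDiag, filter_union]
    refine (card_union_le _ _).trans (Nat.add_le_add_right ?_ _)
    exact (card_filter_le _ _).trans (diag_card A).le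
  have hsq := (sq_card_le_mul_card_collinear (k := k) hs).trans (Nat.mul_le_mul_left _ hdiag)
  have hmul := Nat.mul_le_mul_right #A hA
  linarith [sq #A]

lemma card_projectivization_prod (F : Type*) [Field F] [Fintype F] :
    Nat.card (Projectivization F (F × F)) = Fintype.card F + 1 := by
  rw [Projectivization.card_of_finrank_two F (F × F) (by simp), Nat.card_eq_fintype_card]

/-- The graph on the points of an affine space joining two distinct points when some point of `S`
is collinear with them. An arc containing `S` is independent in it once `S` is removed. -/
def secantGraph (k : Type*) {V P : Type*} [DivisionRing k] [AddCommGroup V] [Module k V]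
    [AddTorsor V P] (S : Set P) : SimpleGraph P where
  Adj x y := x ≠ y ∧ ∃ s ∈ S, Collinear k {s, x, y}
  symm := ⟨fun x y ⟨hxy, s, hs, h⟩ ↦ ⟨hxy.symm, s, hs, by rwa [Set.pair_comm]⟩⟩
  loopless := ⟨fun _ h ↦ h.1 rfl⟩

end AffineSpace

namespace IsArc

variable {F : Type*} [Field F]

lemma mono {P Q : Set (F × F)} (hQ : IsArc F Q) (hPQ : P ⊆ Q) : IsArc F P :=
  fun a ha b hb c hc ↦ hQ a (hPQ ha) b (hPQ hb) c (hPQ hc)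

lemma isIndepSet_secantGraph {S P : Set (F × F)} (hP : IsArc F P) (hSP : S ⊆ P) :
    (secantGraph F S).IsIndepSet (P \ S) := by
  rintro x ⟨hxP, hxS⟩ y ⟨hyP, hyS⟩ hxy ⟨-, s, hs, hcol⟩
  exact hP s (hSP hs) x hxP y hyP (ne_of_mem_of_not_mem hs hxS) (ne_of_mem_of_not_mem hs hyS)
    hxy hcol

open scoped Classical in
lemma card_filter_collinear_le_two {S : Finset (F × F)} (hS : IsArc F S) {x y : F × F}
    (hxy : x ≠ y) : #{s ∈ S | Collinear F {s, x, y}} ≤ 2 := by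
  by_contra! h
  obtain ⟨a, b, c, ha, hb, hc, hab, hac, hbc⟩ := two_lt_card_iff.1 h
  simp only [mem_filter] at ha hb hc
  have hline (s : F × F) (hs : Collinear F {s, x, y}) : s ∈ line[F, x, y] :=
    hs.mem_affineSpan_of_mem_of_ne (by simp) (by simp) (by simp) hxy
  exact hS a ha.1 b hb.1 c hc.1 hab hac hbc (collinear_triple_of_mem_affineSpan_pair
    (hline a ha.2) (hline b hb.2) (hline c hc.2))

variable [Fintype F]

open scoped Classical in
lemma card_mul_sq_card_le_card_offDiag_adj {S A : Finset (F × F)} (hS : IsArc F S)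
    (hSA : Disjoint S A) (hA : 2 * (Fintype.card F + 1) ≤ #A) :
    #S * #A ^ 2 ≤ 4 * (Fintype.card F + 1) *
      #{x ∈ A.offDiag | (secantGraph F (S : Set (F × F))).Adj x.1 x.2} := by
  set E := {x ∈ A.offDiag | (secantGraph F (S : Set (F × F))).Adj x.1 x.2}
  rw [← card_projectivization_prod] at hA ⊢
  have hlower (s) (hs : s ∈ S) : #A ^ 2 ≤
      2 * Nat.card (Projectivization F (F × F)) * #{x ∈ E | Collinear F {s, x.1, x.2}} := by
    refine (sq_card_le_two_mul_card_offDiag_collinear (disjoint_left.1 hSA hs) hA).trans ?_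
    refine Nat.mul_le_mul_left _ (card_le_card fun x hx ↦ ?_)
    simp only [E, mem_filter] at hx ⊢
    exact ⟨⟨hx.1, (mem_offDiag.1 hx.1).2.2, s, hs, hx.2⟩, hx.2⟩
  have hupper (x) (hx : x ∈ E) : #{s ∈ S | Collinear F {s, x.1, x.2}} ≤ 2 :=
    hS.card_filter_collinear_le_two (mem_filter.1 hx).2.1
  calc #S * #A ^ 2
      ≤ ∑ s ∈ S, 2 * Nat.card (Projectivization F (F × F)) *
          #{x ∈ E | Collinear F {s, x.1, x.2}} := S.card_nsmul_le_sum _ _ hlower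
    _ = 2 * Nat.card (Projectivization F (F × F)) *
          ∑ x ∈ E, #{s ∈ S | Collinear F {s, x.1, x.2}} := by
        rw [← mul_sum]
        congr 1
        exact sum_card_bipartiteAbove_eq_sum_card_bipartiteBelow _
    _ ≤ 2 * Nat.card (Projectivization F (F × F)) * (#E * 2) := by
        gcongr
        exact E.sum_le_card_nsmul _ 2 hupper
    _ = 4 * Nat.card (Projectivization F (F × F)) * #E := by ring

open scoped Classical in
lemma exists_card_le_degree_secantGraph {S A : Finset (F × F)} (hS : IsArc F S)
    (hSA : Disjoint S A) (hA : 2 * (Fintype.card F + 1) ≤ #A) :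
    ∃ v ∈ A, (#S : ℝ) / (4 * (Fintype.card F + 1)) * #A ≤
      #{u ∈ A | (secantGraph F (S : Set (F × F))).Adj v u} := by
  set G := secantGraph F (S : Set (F × F))
  have hdeg : #{x ∈ A.offDiag | G.Adj x.1 x.2} = ∑ v ∈ A, #{u ∈ A | G.Adj v u} := by
    have hprod : {x ∈ A.offDiag | G.Adj x.1 x.2} = {x ∈ A ×ˢ A | G.Adj x.1 x.2} := by
      ext x
      simp only [mem_filter, mem_offDiag, mem_product]
      exact ⟨fun h ↦ ⟨⟨h.1.1, h.1.2.1⟩, h.2⟩, fun h ↦ ⟨⟨h.1.1, h.1.2, h.2.ne⟩, h.2⟩⟩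
    simp only [hprod, card_filter, sum_product]
  have hcount : (#S : ℝ) * #A ^ 2 ≤
      4 * (Fintype.card F + 1) * ∑ v ∈ A, (#{u ∈ A | G.Adj v u} : ℝ) :=
    mod_cast hdeg ▸ hS.card_mul_sq_card_le_card_offDiag_adj hSA hA
  apply exists_le_of_sum_le (card_pos.1 (by omega))
  rw [sum_const, nsmul_eq_mul]
  calc (#A : ℝ) * (#S / (4 * (Fintype.card F + 1)) * #A)
      = #S * #A ^ 2 / (4 * (Fintype.card F + 1)) := by ring
    _ ≤ ∑ v ∈ A, (#{u ∈ A | G.Adj v u} : ℝ) := by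
        rwa [div_le_iff₀' (by positivity)]

lemma exists_isContainerFamily_superset {S : Finset (F × F)} (hS : IsArc F S) {k : ℕ}
    (hcard : #S ≤ Fintype.card F)
    (hk : (Fintype.card F : ℝ) ^ 2 * (1 - #S / (4 * (Fintype.card F + 1))) ^ k <
      2 * (Fintype.card F + 1)) :
    ∃ 𝒞, #𝒞 ≤ (Fintype.card F ^ 2 + 1) ^ k ∧
      IsContainerFamily (fun P ↦ IsArc F P ∧ S ⊆ P)
        (#S + (2 * (Fintype.card F + 1) + k)) 𝒞 := by
  classical
  have hβ : (#S : ℝ) / (4 * (Fintype.card F + 1)) ≤ 1 := by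
    rw [div_le_one (by positivity)]
    have : (#S : ℝ) ≤ Fintype.card F := mod_cast hcard
    linarith
  have hU : #Sᶜ ≤ Fintype.card F ^ 2 := by
    simpa [sq] using card_le_univ Sᶜ
  obtain ⟨𝒞, h𝒞card, h𝒞⟩ := exists_isContainerFamily_pairwise_not hβ Sᶜ
    (r := (secantGraph F (S : Set (F × F))).Adj)
    (fun A hA hM ↦ hS.exists_card_le_degree_secantGraph
      (disjoint_compl_right.mono_right hA) hM) k (by
        push_cast
        refine lt_of_le_of_lt ?_ hk
        have := sub_nonneg.2 hβ
        gcongr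
        exact_mod_cast hU)
  refine ⟨𝒞.image (S ∪ ·), card_image_le.trans (h𝒞card.trans (by gcongr)),
    (h𝒞.image_union S).mono ?_ le_rfl⟩
  rintro P ⟨hP, hSP⟩
  refine ⟨fun x hx ↦ mem_compl.2 (mem_sdiff.1 hx).2, ?_⟩
  rw [coe_sdiff]
  exact hP.isIndepSet_secantGraph hSP

end IsArc

lemma exists_isContainerFamily_isArc (F : Type*) [Field F] [Fintype F] {r k : ℕ}
    (hr : r ≤ Fintype.card F)
    (hk : (Fintype.card F : ℝ) ^ 2 * (1 - r / (4 * (Fintype.card F + 1))) ^ k <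
      2 * (Fintype.card F + 1)) :
    ∃ 𝒞, #𝒞 ≤ (Fintype.card F ^ 2) ^ r * (1 + (Fintype.card F ^ 2 + 1) ^ k) ∧
      IsContainerFamily (fun P : Finset (F × F) ↦ IsArc F P)
        (r + (2 * (Fintype.card F + 1) + k)) 𝒞 := by
  classical
  have hplane : Fintype.card (F × F) = Fintype.card F ^ 2 := by rw [Fintype.card_prod, sq]
  have hpowerset : #(powersetCard r (univ : Finset (F × F))) ≤ (Fintype.card F ^ 2) ^ r := by
    rw [card_powersetCard, card_univ, hplane]
    exact Nat.choose_le_pow _ _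
  have hsmall := IsContainerFamily.powersetCard (V := F × F) (r := r) (by
    rw [hplane]; exact hr.trans (Nat.le_self_pow two_ne_zero _))
  obtain ⟨𝒞, hcard, hlarge⟩ := IsContainerFamily.exists_biUnion
    (ι := Finset (F × F)) (s := {S ∈ powersetCard r (univ : Finset (F × F)) | IsArc F S})
    (P := fun S P ↦ IsArc F P ∧ S ⊆ P) (N := (Fintype.card F ^ 2 + 1) ^ k)
    (M := r + (2 * (Fintype.card F + 1) + k)) (by
      intro S hS
      simp only [mem_filter, mem_powersetCard] at hS
      obtain ⟨⟨-, rfl⟩, hSarc⟩ := hS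
      exact hSarc.exists_isContainerFamily_superset hr hk)
  refine ⟨_, ?_, ((hsmall.mono (fun _ h ↦ h) (Nat.le_add_right _ _)).union hlarge).mono
    (fun P hP ↦ ?_) le_rfl⟩
  · calc #(powersetCard r univ ∪ 𝒞)
        ≤ (Fintype.card F ^ 2) ^ r + (Fintype.card F ^ 2) ^ r * (Fintype.card F ^ 2 + 1) ^ k := by
          refine (card_union_le _ _).trans (add_le_add hpowerset (hcard.trans ?_))
          gcongr
          exact (card_filter_le _ _).trans hpowerset
      _ = (Fintype.card F ^ 2) ^ r * (1 + (Fintype.card F ^ 2 + 1) ^ k) := by ring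
  · refine (le_total #P r).imp id fun h ↦ ?_
    obtain ⟨S, hSP, hS⟩ := exists_subset_card_eq h
    exact ⟨S, by simp [hS, hP.mono (coe_subset.2 hSP)], hP, hSP⟩

lemma mul_one_sub_pow_le_one {x β : ℝ} {k : ℕ} (hx : 0 < x) (hβ : β ≤ 1)
    (h : Real.log x ≤ k * β) : x * (1 - β) ^ k ≤ 1 :=
  calc x * (1 - β) ^ k ≤ x * Real.exp (-β) ^ k := by
        have := sub_nonneg.2 hβ
        gcongr
        exact Real.one_sub_le_exp_neg β
    _ = Real.exp (Real.log x - k * β) := by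
        rw [← Real.exp_nat_mul, sub_eq_add_neg, Real.exp_add, Real.exp_log hx, mul_neg]
    _ ≤ 1 := Real.exp_le_one_iff.2 (sub_nonpos.2 h)

lemma log_le_logb_two {x : ℝ} (hx : 1 ≤ x) : Real.log x ≤ Real.logb 2 x :=
  le_div_self (Real.log_nonneg hx) (Real.log_pos one_lt_two)
    (by linarith [Real.log_two_lt_d9])

lemma log_le_two_mul_sqrt {x : ℝ} (hx : 0 ≤ x) : Real.log x ≤ 2 * √x := by
  have := Real.log_le_rpow_div hx (ε := 1 / 2) (by norm_num)
  rw [Real.sqrt_eq_rpow]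
  linarith

lemma exists_sqrt_parameters {n : ℕ} (hn : 2 ≤ n) :
    ∃ r k : ℕ, r ≤ n ∧ (n : ℝ) ^ 2 * (1 - r / (4 * (n + 1))) ^ k < 2 * (n + 1) ∧
      r ≤ 2 * √n ∧ k ≤ 2 * √n * (8 * Real.log n + 1) := by
  have hn' : (2 : ℝ) ≤ n := mod_cast hn
  set r := n.sqrt + 1
  set m := ⌈8 * Real.log n⌉₊
  have hrn : r ≤ n := Nat.sqrt_lt_self (by omega)
  have hr : (r : ℝ) ≤ 2 * √n := by
    have hone : 1 ≤ √(n : ℝ) := Real.one_le_sqrt.2 (by linarith)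
    have hsqrt : (n.sqrt : ℝ) ≤ √n := Real.nat_sqrt_le_real_sqrt
    push_cast [r]
    linarith
  have hr_sq : (n : ℝ) + 1 ≤ r * r := mod_cast Nat.lt_succ_sqrt n
  have hm : 8 * Real.log n ≤ m := Nat.le_ceil _
  -- Since `n + 1 ≤ r²`, the rate `r / (4 (n + 1))` times `k = r m` is at least `m / 4 ≥ 2 log n`.
  refine ⟨r, r * m, hrn, ?_, hr, ?_⟩
  · have hβ : (r : ℝ) / (4 * (n + 1)) ≤ 1 := by
      rw [div_le_one (by positivity)]
      have : (r : ℝ) ≤ n := mod_cast hrn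
      linarith
    have hexp : Real.log ((n : ℝ) ^ 2) ≤ ↑(r * m) * (r / (4 * (n + 1))) := by
      rw [Real.log_pow, ← mul_div_assoc, le_div_iff₀ (by positivity)]
      push_cast
      calc 2 * Real.log n * (4 * (n + 1)) = (n + 1) * (8 * Real.log n) := by ring
        _ ≤ r * r * m := by gcongr
        _ = r * m * r := by ring
    linarith [mul_one_sub_pow_le_one (by positivity) hβ hexp]
  · push_cast
    gcongr
    exact (Nat.ceil_lt_add_one (by positivity)).le

lemma pow_mul_one_add_pow_le {n : ℕ} (hn : 2 ≤ n) (r k : ℕ) :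
    (n ^ 2) ^ r * (1 + (n ^ 2 + 1) ^ k) ≤ n ^ (2 * r + 3 * k + 1) := by
  have hcube : n ^ 2 + 1 ≤ n ^ 3 := by nlinarith [sq_nonneg n]
  have hpos : 1 ≤ n ^ (3 * k) := Nat.one_le_pow _ _ (by omega)
  calc (n ^ 2) ^ r * (1 + (n ^ 2 + 1) ^ k)
      ≤ (n ^ 2) ^ r * (n ^ (3 * k) + (n ^ 3) ^ k) := by gcongr
    _ = n ^ (2 * r + 3 * k) * 2 := by ring
    _ ≤ n ^ (2 * r + 3 * k) * n := by gcongr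
    _ = n ^ (2 * r + 3 * k + 1) := (pow_succ _ _).symm

lemma pow_eq_two_rpow {x : ℝ} (hx : 0 < x) (e : ℕ) : x ^ e = 2 ^ (Real.logb 2 x * e) := by
  rw [Real.rpow_mul two_pos.le, Real.rpow_logb two_pos (by norm_num) hx, Real.rpow_natCast]

theorem exists_isContainerFamily_isArc_sqrt (F : Type*) [Field F] [Fintype F] :
    ∃ 𝒞, (#𝒞 : ℝ) ≤ 2 ^ (60 * √(Fintype.card F : ℝ) * Real.logb 2 (Fintype.card F) ^ 2) ∧
      IsContainerFamily (fun P : Finset (F × F) ↦ IsArc F P) (40 * Fintype.card F) 𝒞 := by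
  have hn : 2 ≤ Fintype.card F := Fintype.one_lt_card
  obtain ⟨r, k, hr, hdecay, hr_le, hk_le⟩ := exists_sqrt_parameters hn
  obtain ⟨𝒞, hcard, h𝒞⟩ := exists_isContainerFamily_isArc F hr hdecay
  set n := Fintype.card F
  have hn' : (2 : ℝ) ≤ n := mod_cast hn
  set w := √(n : ℝ)
  set L := Real.logb 2 n
  have hw : 1 ≤ w := Real.one_le_sqrt.2 (by linarith)
  have hw_sq : w * w = n := Real.mul_self_sqrt (by positivity)
  have hL : 1 ≤ L := by
    rw [Real.le_logb_iff_rpow_le one_lt_two (by positivity)]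
    simpa using hn'
  refine ⟨𝒞, ?_, h𝒞.mono (fun _ h ↦ h) ?_⟩
  · have hexp : (2 * r + 3 * k + 1 : ℝ) ≤ 60 * w * L := by
      have hk : (k : ℝ) ≤ 2 * w * (8 * L + 1) :=
        hk_le.trans (by gcongr; exact log_le_logb_two (by linarith))
      have hwL : w ≤ w * L := le_mul_of_one_le_right (by linarith) hL
      linarith
    calc (#𝒞 : ℝ) ≤ (n : ℝ) ^ (2 * r + 3 * k + 1) :=
          mod_cast hcard.trans (pow_mul_one_add_pow_le hn r k)
      _ = 2 ^ (L * (2 * r + 3 * k + 1 : ℝ)) := by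
          rw [pow_eq_two_rpow (by positivity)]
          push_cast
          rfl
      _ ≤ 2 ^ (L * (60 * w * L)) := by gcongr; norm_num
      _ = 2 ^ (60 * w * L ^ 2) := by ring_nf
  · have hk : (k : ℝ) ≤ 34 * n :=
      calc (k : ℝ) ≤ 2 * w * (8 * (2 * w) + 1) :=
            hk_le.trans (by gcongr; exact log_le_two_mul_sqrt (by positivity))
        _ ≤ 2 * w * (8 * (2 * w) + w) := by gcongr
        _ = 34 * n := by rw [← hw_sq]; ring
    have hwn : w ≤ n := hw_sq ▸ le_mul_of_one_le_left (by linarith) hw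
    have : (r + (2 * (n + 1) + k) : ℝ) ≤ 40 * n := by linarith
    exact_mod_cast this

theorem container_lemma_general :
    ∃ c : ℝ, 0 < c ∧ ∀ δ : ℝ, 0 < δ → ∃ q₀ : ℕ,
      ∀ (F : Type*) [Field F] [Fintype F], q₀ ≤ Fintype.card F →
      ∃ 𝒞 : Finset (Finset (F × F)),
        (∀ t : ℝ, 1 / 2 + δ ≤ t → (#𝒞 : ℝ) ≤
          2 ^ (c * (Fintype.card F : ℝ) ^ (t - δ) * Real.logb 2 (Fintype.card F) ^ 2)) ∧
        (∀ t : ℝ, t ≤ 1 + 2 * δ →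
          ∀ C ∈ 𝒞, (#C : ℝ) ≤ (Fintype.card F : ℝ) ^ (2 - t + 3 * δ)) ∧
        ∀ P : Set (F × F), IsArc F P → ∃ C ∈ 𝒞, P ⊆ ↑C := by
  refine ⟨60, by norm_num, fun δ hδ ↦ ?_⟩
  obtain ⟨q₀, hq₀⟩ := Filter.eventually_atTop.1
    (((tendsto_rpow_atTop hδ).comp tendsto_natCast_atTop_atTop).eventually_ge_atTop (40 : ℝ))
  refine ⟨q₀, fun F _ _ hF ↦ ?_⟩
  obtain ⟨𝒞, hcard, h𝒞⟩ := exists_isContainerFamily_isArc_sqrt F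
  have hq : (1 : ℝ) ≤ Fintype.card F := mod_cast Fintype.card_pos (α := F)
  refine ⟨𝒞, fun t ht ↦ hcard.trans ?_, fun t ht C hC ↦ ?_, fun P hP ↦ ?_⟩
  · rw [Real.sqrt_eq_rpow]
    gcongr
    · norm_num
    · linarith
  · calc (#C : ℝ) ≤ 40 * Fintype.card F := mod_cast h𝒞.card_le C hC
      _ ≤ (Fintype.card F : ℝ) ^ δ * Fintype.card F := by gcongr; exact hq₀ _ hF
      _ = (Fintype.card F : ℝ) ^ (δ + 1) := (Real.rpow_add_one (by positivity) δ).symm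
      _ ≤ (Fintype.card F : ℝ) ^ (2 - t + 3 * δ) :=
          Real.rpow_le_rpow_of_exponent_le hq (by linarith)
  · classical
    obtain ⟨C, hC, hPC⟩ := h𝒞.exists_superset P.toFinset (by rwa [Set.coe_toFinset])
    exact ⟨C, hC, Set.toFinset_subset.1 hPC⟩

theorem container_lemma :
    ∀ δ : ℝ, 0 < δ → ∃ c : ℝ, 0 < c ∧ ∃ q₀ : ℕ,
      ∀ (F : Type) [Field F] [Fintype F], q₀ ≤ Fintype.card F →
      ∀ t : ℝ, 1 / 2 + 2 * δ ≤ t → t ≤ 1 →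
      ∃ 𝒞 : Finset (Finset (F × F)),
        (𝒞.card : ℝ) ≤
          2 ^ (c * (Fintype.card F : ℝ) ^ (t - δ) *
            (Real.logb 2 (Fintype.card F)) ^ 2) ∧
        (∀ C ∈ 𝒞, (C.card : ℝ) ≤ (Fintype.card F : ℝ) ^ (2 - t + 3 * δ)) ∧
        (∀ P : Set (F × F), IsArc F P → ∃ C ∈ 𝒞, P ⊆ ↑C) := by
  intro δ hδ
  obtain ⟨c, hc, hgeneral⟩ := container_lemma_general
  obtain ⟨q₀, hq₀⟩ := hgeneral δ hδ
  refine ⟨c, hc, q₀, fun F _ _ hF t ht ht' ↦ ?_⟩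
  obtain ⟨𝒞, hcard, hsize, hcover⟩ := hq₀ F hF
  exact ⟨𝒞, hcard t (by linarith), hsize t (by linarith), hcover⟩
end

section
/- For every δ > 0 and every ε > 0 there exists q₀ such that for every prime power q ≥ q₀ and every real p with 0 < p < 1/q, a p-random subset Q of F² satisfies a(Q) ≤ q^{1/2 + 2δ} with probability at least 1 − ε. -/
open Finset MeasureTheory
open scoped NNReal ENNReal

/-!
By a union bound it suffices that the number of `k`-arcs, times `q ^ (-k)`, is small. For `k` near
`√q` the trivial count of `k`-sets is far too large, so arcs are counted by a graph-container
argument.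

Fix `t ≈ √q` points `T` of an arc. No line through a point of `T` contains two further points of the
arc, so the remaining `k - t` points are independent in the graph joining two points which are
collinear with some point of `T`. Since only `q + 1` lines pass through a point and a line meets `T`
at most twice, Cauchy–Schwarz shows that every set `X` of at least `8q` points has a vertex joined
to a `t / (16q)` fraction of `X`.

Independent sets in such a graph are counted by the Kleitman–Winston method, as a bound on the
independence polynomial: after `≈ 16 √q log q` branchings at most `8q` candidates remain, and at
weight `e / q` these contribute only the constant factor `exp (8e)`. The number of `k`-arcs is thus
at most `(q / e) ^ k * exp (O(√q log² q))`.
-/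

section IndependencePolynomial

variable {V : Type*} (G : SimpleGraph V) {lam : ℝ}

open scoped Classical in
/-- The independence polynomial, evaluated at `lam`, of the subgraph of `G` induced on `X`. -/
noncomputable def indepPoly (lam : ℝ) (X : Finset V) : ℝ :=
  ∑ I ∈ X.powerset with G.IsIndepSet ↑(I : Finset V), lam ^ #I

open scoped Classical in
lemma indepPoly_le_exp (hlam : 0 ≤ lam) (X : Finset V) :
    indepPoly G lam X ≤ Real.exp (lam * #X) :=
  calc
    indepPoly G lam X ≤ ∑ I ∈ X.powerset, lam ^ #I :=
      sum_le_sum_of_subset_of_nonneg (filter_subset _ _) fun _ _ _ => by positivity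
    _ = (lam + 1) ^ #X := by simpa using sum_pow_mul_eq_add_pow lam 1 X
    _ ≤ Real.exp lam ^ #X := by gcongr; exact Real.add_one_le_exp lam
    _ = Real.exp (lam * #X) := by rw [← Real.exp_nat_mul, mul_comm]

open scoped Classical in
/-- An independent set either misses `v`, or contains `v` and hence no neighbour of `v`. -/
lemma indepPoly_le_indepPoly_erase_add (hlam : 0 ≤ lam) {X : Finset V} {v : V} (hv : v ∈ X) :
    indepPoly G lam X ≤ indepPoly G lam (X.erase v)
      + lam * indepPoly G lam {y ∈ X.erase v | ¬ G.Adj v y} := by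
  have hsplit := sum_powerset_insert (notMem_erase v X)
    fun I => if G.IsIndepSet (I : Set V) then lam ^ #I else 0
  simp only [insert_erase hv, ← sum_filter] at hsplit
  have hcontaining : ∑ I ∈ (X.erase v).powerset with G.IsIndepSet ↑(insert v I : Finset V),
      lam ^ #(insert v I) ≤ lam * indepPoly G lam {y ∈ X.erase v | ¬ G.Adj v y} := by
    rw [indepPoly, mul_sum]
    calc
      _ = ∑ I ∈ (X.erase v).powerset with G.IsIndepSet ↑(insert v I : Finset V), lam * lam ^ #I :=
        sum_congr rfl fun I hI => by
          have hvI : v ∉ I := fun h => notMem_erase v X (mem_powerset.1 (mem_filter.1 hI).1 h)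
          rw [card_insert_of_notMem hvI, pow_succ']
      _ ≤ _ := by
        refine sum_le_sum_of_subset_of_nonneg (fun I hI => ?_) fun _ _ _ => by positivity
        simp only [mem_filter, mem_powerset] at hI ⊢
        exact ⟨fun y hy => mem_filter.2 ⟨hI.1 hy, hI.2 (by simp) (by simp [hy])
          (ne_of_mem_erase (hI.1 hy)).symm⟩, hI.2.mono (by simp)⟩
  calc
    indepPoly G lam X = indepPoly G lam (X.erase v) + _ := hsplit
    _ ≤ _ := by gcongr

open scoped Classical in
/-- The Kleitman–Winston bound. Branching on a vertex `v` of large degree in `X` either discards `v`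
or shrinks `X` by a factor `1 - β ≤ exp (-β)`; the latter happens at most `j` times before the size
drops to `R`. -/
lemma indepPoly_le_of_forall_exists_dense {β R : ℝ} (hlam : 0 ≤ lam)
    (hdense : ∀ X : Finset V, R < #X → ∃ v ∈ X, β * #X ≤ #{y ∈ X | G.Adj v y})
    (X : Finset V) {j : ℕ} (hX : #X ≤ R * Real.exp (β * j)) :
    indepPoly G lam X ≤ Real.exp (lam * R) * (1 + lam * #X) ^ j := by
  induction X using Finset.strongInduction generalizing j with
  | H X ih =>
  rcases le_or_gt (#X : ℝ) R with hsmall | hlarge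
  · calc
      indepPoly G lam X ≤ Real.exp (lam * R) :=
        (indepPoly_le_exp G hlam X).trans (by gcongr)
      _ ≤ Real.exp (lam * R) * (1 + lam * #X) ^ j :=
        le_mul_of_one_le_right (Real.exp_pos _).le
          (one_le_pow₀ (le_add_of_nonneg_right (by positivity)))
  obtain ⟨i, rfl⟩ : ∃ i, j = i + 1 :=
    Nat.exists_eq_succ_of_ne_zero (by rintro rfl; exact hlarge.not_ge (by simpa using hX))
  obtain ⟨v, hv, hdeg⟩ := hdense X hlarge
  set Y : Finset V := {y ∈ X.erase v | ¬ G.Adj v y}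
  have hYX : Y ⊆ X.erase v := filter_subset _ _
  have hcard : (#(X.erase v) : ℝ) + 1 = #X := by exact_mod_cast card_erase_add_one hv
  have hYcard : (#Y : ℝ) ≤ #(X.erase v) := by exact_mod_cast card_le_card hYX
  have herase : indepPoly G lam (X.erase v) ≤
      Real.exp (lam * R) * (1 + lam * #(X.erase v)) ^ (i + 1) :=
    ih _ (erase_ssubset hv) (by linarith)
  have hY : indepPoly G lam Y ≤ Real.exp (lam * R) * (1 + lam * #(X.erase v)) ^ i := by
    have hshrink : (#Y : ℝ) ≤ Real.exp (-β) * #X := by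
      have hle : (#Y : ℝ) ≤ #{y ∈ X | ¬ G.Adj v y} := by
        exact_mod_cast card_le_card (filter_subset_filter _ (erase_subset v X))
      have hadd : (#{y ∈ X | G.Adj v y} : ℝ) + #{y ∈ X | ¬ G.Adj v y} = #X := by
        exact_mod_cast card_filter_add_card_filter_not (s := X) (G.Adj v)
      calc (#Y : ℝ) ≤ (1 - β) * #X := by linarith
        _ ≤ Real.exp (-β) * #X := by gcongr; exact Real.one_sub_le_exp_neg β
    refine (ih Y (hYX.trans_ssubset (erase_ssubset hv)) (j := i) ?_).trans (by gcongr)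
    calc (#Y : ℝ) ≤ Real.exp (-β) * (R * Real.exp (β * (i + 1 : ℕ))) := hshrink.trans (by gcongr)
      _ = R * Real.exp (β * i) := by
        rw [mul_left_comm, ← Real.exp_add]; push_cast; ring_nf
  calc
    indepPoly G lam X ≤ indepPoly G lam (X.erase v) + lam * indepPoly G lam Y :=
      indepPoly_le_indepPoly_erase_add G hlam hv
    _ ≤ Real.exp (lam * R) * (1 + lam * #(X.erase v)) ^ (i + 1)
        + lam * (Real.exp (lam * R) * (1 + lam * #(X.erase v)) ^ i) := by gcongr
    _ = Real.exp (lam * R) * ((1 + lam * #(X.erase v)) ^ i * (1 + lam * #X)) := by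
      rw [← hcard]; ring
    _ ≤ Real.exp (lam * R) * (1 + lam * #X) ^ (i + 1) := by
      rw [pow_succ]; gcongr; exact erase_subset v X

lemma card_indepSetFinset_mul_pow_le [Fintype V] [DecidableEq V] [DecidableRel G.Adj]
    (hlam : 0 ≤ lam) (m : ℕ) :
    #(G.indepSetFinset m) * lam ^ m ≤ indepPoly G lam univ := by
  rw [indepPoly, ← nsmul_eq_mul, ← sum_const]
  calc
    ∑ _I ∈ G.indepSetFinset m, lam ^ m = ∑ I ∈ G.indepSetFinset m, lam ^ #I :=
      sum_congr rfl fun I hI => by rw [(G.mem_indepSetFinset_iff.1 hI).card_eq]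
    _ ≤ _ := sum_le_sum_of_subset_of_nonneg
      (fun I hI => by simpa using (G.mem_indepSetFinset_iff.1 hI).isIndepSet)
      fun _ _ _ => by positivity

end IndependencePolynomial

section CollinearityGraph

open scoped LinearAlgebra.Projectivization

variable {F : Type*} [Field F] {P T I X : Finset (F × F)} {a b c v x y : F × F}

lemma IsArc.mono_s4 {P Q : Set (F × F)} (hQ : IsArc F Q) (hPQ : P ⊆ Q) : IsArc F P :=
  fun a ha b hb c hc => hQ a (hPQ ha) b (hPQ hb) c (hPQ hc)

/-- Three distinct collinear points, the configuration that arcs avoid. -/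
def IsCollinearTriple (a b c : F × F) : Prop :=
  a ≠ b ∧ a ≠ c ∧ b ≠ c ∧ Collinear F {a, b, c}

lemma IsArc.not_isCollinearTriple {P : Set (F × F)} (hP : IsArc F P) (ha : a ∈ P) (hb : b ∈ P)
    (hc : c ∈ P) : ¬ IsCollinearTriple a b c :=
  fun ⟨hab, hac, hbc, h⟩ => hP a ha b hb c hc hab hac hbc h

lemma IsCollinearTriple.swap_right (h : IsCollinearTriple a b c) : IsCollinearTriple a c b :=
  ⟨h.2.1, h.1, h.2.2.1.symm, Set.pair_comm b c ▸ h.2.2.2⟩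

lemma IsCollinearTriple.mem_line (h : IsCollinearTriple a b c) : a ∈ line[F, b, c] :=
  h.2.2.2.mem_affineSpan_of_mem_of_ne (by simp) (by simp) (by simp) h.2.2.1

open scoped Classical in
lemma IsArc.card_filter_isCollinearTriple_le_two (hT : IsArc F (T : Set (F × F))) (x y : F × F) :
    #{v ∈ T | IsCollinearTriple v x y} ≤ 2 := by
  by_contra! h
  obtain ⟨a, b, c, ha, hb, hc, hab, hac, hbc⟩ := two_lt_card_iff.1 h
  rw [mem_filter] at ha hb hc
  exact hT a ha.1 b hb.1 c hc.1 hab hac hbc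
    (collinear_triple_of_mem_affineSpan_pair ha.2.mem_line hb.2.mem_line hc.2.mem_line)

/-- Two points are adjacent when they form a collinear triple with some point of `T`. If `S ⊇ T` is
an arc, then `S \ T` is independent in this graph. -/
def collinearityGraph (T : Finset (F × F)) : SimpleGraph (F × F) where
  Adj x y := ∃ v ∈ T, IsCollinearTriple v x y
  symm := ⟨fun _ _ ⟨v, hv, h⟩ => ⟨v, hv, h.swap_right⟩⟩
  loopless := ⟨fun _ ⟨_, _, h⟩ => h.2.2.1 rfl⟩

open scoped Classical in
lemma IsArc.isIndepSet_collinearityGraph (h : IsArc F ((T ∪ I : Finset (F × F)) : Set (F × F))) :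
    (collinearityGraph T).IsIndepSet (I : Set (F × F)) := by
  rintro x hx y hy - ⟨v, hv, hvxy⟩
  exact h.not_isCollinearTriple (by simp [hv]) (by simp [mem_coe.1 hx]) (by simp [mem_coe.1 hy])
    hvxy

/-- Cauchy–Schwarz over the fibres of `f`. -/
lemma sq_card_le_card_image_mul_s4 {α β : Type*} [DecidableEq β] (s : Finset α)
    (f : α → β) :
    #s ^ 2 ≤ #(s.image f) * (#{z ∈ s.offDiag | f z.1 = f z.2} + #s) := by
  classical
  have hfibers : ∑ d ∈ s.image f, #{x ∈ s | f x = d} ^ 2 = #{z ∈ s ×ˢ s | f z.1 = f z.2} := by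
    rw [card_eq_sum_card_fiberwise (f := fun z => f z.1) (t := s.image f)
      fun z hz => mem_image_of_mem f (mem_product.1 (mem_filter.1 hz).1).1]
    refine sum_congr rfl fun d _ => ?_
    rw [sq, ← card_product]
    congr 1
    ext z
    simp only [mem_product, mem_filter]
    grind
  calc
    #s ^ 2 = (∑ d ∈ s.image f, #{x ∈ s | f x = d}) ^ 2 := by
      rw [← card_eq_sum_card_image]
    _ ≤ #(s.image f) * ∑ d ∈ s.image f, #{x ∈ s | f x = d} ^ 2 := sq_sum_le_card_mul_sum_sq
    _ ≤ #(s.image f) * (#{z ∈ s.offDiag | f z.1 = f z.2} + #s) := by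
      rw [hfibers, ← diag_union_offDiag, filter_union, add_comm, ← diag_card s]
      gcongr
      exact (card_union_le _ _).trans (by gcongr; exact filter_subset _ _)

lemma isCollinearTriple_of_span_eq (hx : v ≠ x) (hy : v ≠ y) (hxy : x ≠ y)
    (h : F ∙ (x - v) = F ∙ (y - v)) : IsCollinearTriple v x y := by
  refine ⟨hx, hy, hxy, (collinear_iff_of_mem (p₀ := v) (by simp)).2 ⟨y - v, ?_⟩⟩
  obtain ⟨r, hr⟩ := Submodule.mem_span_singleton.1 (h ▸ Submodule.mem_span_singleton_self (x - v))
  rintro p (rfl | rfl | rfl)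
  · exact ⟨0, by simp⟩
  · exact ⟨r, by simp [hr]⟩
  · exact ⟨1, by simp⟩

variable [Fintype F]

open scoped Classical in
lemma card_image_span_sub_le (hv : v ∉ X) :
    #(X.image fun x => F ∙ (x - v)) ≤ Fintype.card F + 1 := by
  have : Fintype (ℙ F (F × F)) := Fintype.ofFinite _
  have hsub : X.image (fun x => F ∙ (x - v)) ⊆
      (univ : Finset (ℙ F (F × F))).image Projectivization.submodule := by
    intro L hL
    obtain ⟨x, hx, rfl⟩ := mem_image.1 hL
    have hxv : x - v ≠ 0 := sub_ne_zero.2 (ne_of_mem_of_not_mem hx hv)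
    exact mem_image.2 ⟨.mk F (x - v) hxv, mem_univ _, Projectivization.submodule_mk _ _⟩
  calc
    _ ≤ Fintype.card (ℙ F (F × F)) := (card_le_card hsub).trans card_image_le
    _ = Fintype.card F + 1 := by
      rw [Fintype.card_eq_nat_card, Projectivization.card_of_finrank_two _ _ (by simp),
        Nat.card_eq_fintype_card]

open scoped Classical in
lemma sq_card_div_le_card_filter_isCollinearTriple (v : F × F)
    (hX : 8 * (Fintype.card F : ℝ) ≤ #X) :
    (#X : ℝ) ^ 2 / (8 * Fintype.card F) ≤ #{z ∈ X ×ˢ X | IsCollinearTriple v z.1 z.2} := by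
  set pairs := {z ∈ X ×ˢ X | IsCollinearTriple v z.1 z.2}
  set Y := X.erase v
  have hpairs : #{z ∈ Y.offDiag | F ∙ (z.1 - v) = F ∙ (z.2 - v)} ≤ #pairs := by
    gcongr
    intro z hz
    simp only [Y, pairs, mem_filter, mem_offDiag, mem_erase, mem_product] at hz ⊢
    obtain ⟨⟨⟨h1v, h1⟩, ⟨h2v, h2⟩, hne⟩, hspan⟩ := hz
    exact ⟨⟨h1, h2⟩, isCollinearTriple_of_span_eq h1v.symm h2v.symm hne hspan⟩
  have hcauchy : #Y ^ 2 ≤ (Fintype.card F + 1) * (#pairs + #Y) :=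
    (sq_card_le_card_image_mul_s4 Y fun x => F ∙ (x - v)).trans <|
      Nat.mul_le_mul (card_image_span_sub_le (notMem_erase v X)) (Nat.add_le_add_right hpairs _)
  have hY : #X ≤ #Y + 1 := Nat.sub_le_iff_le_add.1 pred_card_le_card_erase
  have hq : 2 ≤ Fintype.card F := Fintype.one_lt_card
  rify at hcauchy hY hq
  rw [div_le_iff₀ (by positivity)]
  have hhalf : (#X : ℝ) / 2 * (#X / 2) ≤ #Y * (#Y - (Fintype.card F + 1)) := by
    apply mul_le_mul <;> linarith
  have hle : ((Fintype.card F : ℝ) + 1) * #pairs ≤ 2 * Fintype.card F * #pairs := by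
    gcongr; linarith
  linarith

open scoped Classical in
/-- Double counting of the incidences between points `v ∈ T` and pairs in `X` collinear with `v`,
then averaging over `X`. -/
lemma IsArc.exists_le_card_filter_adj (hT : IsArc F (T : Set (F × F)))
    (hX : 8 * (Fintype.card F : ℝ) ≤ #X) :
    ∃ x ∈ X, (#T : ℝ) / (16 * Fintype.card F) * #X ≤
      #{y ∈ X | (collinearityGraph T).Adj x y} := by
  have hq : (0 : ℝ) < Fintype.card F := by exact_mod_cast Fintype.card_pos
  have hXne : X.Nonempty := card_pos.1 (by rify; linarith)
  set edges := {z ∈ X ×ˢ X | (collinearityGraph T).Adj z.1 z.2}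
  have hincidences : (#T : ℝ) * ((#X : ℝ) ^ 2 / (8 * Fintype.card F)) ≤ #edges * 2 := by
    rw [← nsmul_eq_mul, ← nsmul_eq_mul]
    refine card_nsmul_le_card_nsmul (fun v z => IsCollinearTriple v z.1 z.2) (fun v hv => ?_)
      fun z _ => by exact_mod_cast hT.card_filter_isCollinearTriple_le_two z.1 z.2
    refine (sq_card_div_le_card_filter_isCollinearTriple v hX).trans ?_
    norm_cast
    refine card_le_card fun z hz => ?_
    rw [mem_filter] at hz
    exact mem_filter.2 ⟨mem_filter.2 ⟨hz.1, v, hv, hz.2⟩, hz.2⟩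
  have hedges : #edges = ∑ x ∈ X, #{y ∈ X | (collinearityGraph T).Adj x y} := by
    simp only [edges, card_filter, sum_product]
  refine exists_le_of_sum_le hXne ?_
  rw [← Nat.cast_sum, ← hedges, sum_const, nsmul_eq_mul]
  calc
    _ = (#T : ℝ) * ((#X : ℝ) ^ 2 / (8 * Fintype.card F)) / 2 := by ring
    _ ≤ #edges := by linarith

end CollinearityGraph

section CountingArcs

variable {F : Type*} [Field F] [Fintype F] {k t : ℕ}

open scoped Classical in
lemma numArcs_eq_card_filter (k : ℕ) :
    numArcs F k = #{S : Finset (F × F) | #S = k ∧ IsArc F (S : Set (F × F))} := by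
  rw [numArcs, Nat.card_eq_fintype_card, Fintype.card_subtype]

open scoped Classical in
lemma numArcs_le_sum_card_indepSetFinset (htk : t ≤ k) :
    numArcs F k ≤ ∑ T ∈ powersetCard t univ with IsArc F ↑(T : Finset (F × F)),
      #((collinearityGraph T).indepSetFinset (k - t)) := by
  rw [numArcs_eq_card_filter]
  refine le_trans (card_le_card ?_) (card_biUnion_le.trans
    (sum_le_sum fun T _ => card_image_le (f := fun I => T ∪ I)))
  intro S hS
  simp only [mem_filter_univ] at hS
  obtain ⟨hSk, hSarc⟩ := hS
  obtain ⟨T, hTS, hTt⟩ := exists_subset_card_eq (htk.trans hSk.ge)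
  have hunion : T ∪ S \ T = S := union_sdiff_of_subset hTS
  refine mem_biUnion.2 ⟨T, mem_filter.2 ⟨by simp [hTt], hSarc.mono_s4 (mod_cast hTS)⟩,
    mem_image.2 ⟨S \ T, ?_, hunion⟩⟩
  rw [SimpleGraph.mem_indepSetFinset_iff]
  exact ⟨IsArc.isIndepSet_collinearityGraph (hunion.symm ▸ hSarc),
    by rw [card_sdiff_of_subset hTS, hSk, hTt]⟩

open scoped Classical in
lemma numArcs_mul_pow_le {j : ℕ} {lam : ℝ} (hlam : 0 ≤ lam) (htk : t ≤ k)
    (hj : (Fintype.card F : ℝ) ≤ 8 * Real.exp (t / (16 * Fintype.card F) * j)) :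
    numArcs F k * lam ^ k ≤ (lam * (Fintype.card F : ℝ) ^ 2) ^ t *
      (Real.exp (lam * (8 * Fintype.card F)) * (1 + lam * (Fintype.card F : ℝ) ^ 2) ^ j) := by
  set q : ℝ := (Fintype.card F : ℝ)
  have hcard : (#(univ : Finset (F × F)) : ℝ) = q ^ 2 := by simp [q, sq]
  set B : ℝ := Real.exp (lam * (8 * q)) * (1 + lam * q ^ 2) ^ j
  set arcs : Finset (Finset (F × F)) := {T ∈ powersetCard t univ | IsArc F ↑T}
  have hindep (T) (hT : T ∈ arcs) :
      #((collinearityGraph T).indepSetFinset (k - t)) * lam ^ (k - t) ≤ B := by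
    obtain ⟨hTt, hTarc⟩ := mem_filter.1 hT
    rw [mem_powersetCard_univ] at hTt
    refine (card_indepSetFinset_mul_pow_le _ hlam _).trans ?_
    refine (indepPoly_le_of_forall_exists_dense _ hlam (β := t / (16 * q)) (R := 8 * q) (j := j)
      (fun X hX => hTt ▸ hTarc.exists_le_card_filter_adj hX.le) univ ?_).trans_eq (by rw [hcard])
    calc
      (#(univ : Finset (F × F)) : ℝ) = q * q := by rw [hcard, sq]
      _ ≤ q * (8 * Real.exp (t / (16 * q) * j)) := by gcongr
      _ = 8 * q * Real.exp (t / (16 * q) * j) := by ring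
  have harcs : (#arcs : ℝ) ≤ (q ^ 2) ^ t := by
    rw [← hcard]
    exact_mod_cast (card_le_card (filter_subset _ _)).trans
      ((card_powersetCard _ _).trans_le (Nat.choose_le_pow _ _))
  calc
    numArcs F k * lam ^ k
      ≤ (∑ T ∈ arcs, #((collinearityGraph T).indepSetFinset (k - t)) : ℕ) * lam ^ k := by
        gcongr; exact numArcs_le_sum_card_indepSetFinset htk
    _ = lam ^ t * ∑ T ∈ arcs,
        #((collinearityGraph T).indepSetFinset (k - t)) * lam ^ (k - t) := by
      rw [← sum_mul, ← pow_sub_mul_pow lam htk]; push_cast; ring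
    _ ≤ lam ^ t * (#arcs * B) := by
      gcongr; exact (sum_le_sum hindep).trans_eq (by rw [sum_const, nsmul_eq_mul])
    _ ≤ lam ^ t * ((q ^ 2) ^ t * B) := by gcongr
    _ = (lam * q ^ 2) ^ t * B := by rw [mul_pow, mul_assoc]

/-- The constant `100` makes the bound valid down to `q = 2`. -/
lemma container_bound_le_exp {q : ℝ} {t j : ℕ} (hq : 2 ≤ q) (ht : (t : ℝ) ≤ √q + 1)
    (hj : (j : ℝ) ≤ 16 * √q * Real.log q + 1) :
    (Real.exp 1 * q) ^ t * (Real.exp (8 * Real.exp 1) * (1 + Real.exp 1 * q) ^ j) ≤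
      Real.exp (100 * √q * Real.log q ^ 2) := by
  have hq0 : 0 < q := by linarith
  set L := Real.log q
  set s := √q
  have hexpL : Real.exp L = q := Real.exp_log hq0
  have hL : 0.69 ≤ L := by
    linarith [Real.log_two_gt_d9, Real.log_le_log (by norm_num) hq]
  have hs : 1.4 ≤ s := Real.le_sqrt_of_sq_le (by linarith)
  have he : Real.exp 1 < 3 := Real.exp_one_lt_three
  have hbase : 1 + Real.exp 1 * q ≤ Real.exp (3 * L) := by
    have hcube : Real.exp (3 * L) = q ^ 3 := by rw [← hexpL, ← Real.exp_nat_mul]; norm_num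
    rw [hcube]
    nlinarith [mul_self_nonneg (q - 2)]
  calc
    _ ≤ Real.exp (1 + L) ^ t * (Real.exp (8 * 3) * Real.exp (3 * L) ^ j) := by
      rw [Real.exp_add, hexpL]
      gcongr
    _ = Real.exp (t * (1 + L) + (24 + j * (3 * L))) := by
      rw [← Real.exp_nat_mul, ← Real.exp_nat_mul, Real.exp_add, Real.exp_add]
      norm_num
    _ ≤ Real.exp ((s + 1) * (1 + L) + (24 + (16 * s * L + 1) * (3 * L))) := by gcongr
    _ ≤ Real.exp (100 * s * L ^ 2) := by
      gcongr
      have hLL : 0.69 * L ≤ L ^ 2 := by nlinarith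
      have hsL : s * (0.69 * L) ≤ s * L ^ 2 := by gcongr
      have hs' : 0.69 * s ≤ s * L := by nlinarith
      have hL' : 1.4 * L ≤ s * L := by nlinarith
      linarith

lemma numArcs_mul_exp_one_div_pow_le (hk : √(Fintype.card F) ≤ k) :
    numArcs F k * (Real.exp 1 / Fintype.card F) ^ k ≤
      Real.exp (100 * √(Fintype.card F) * Real.log (Fintype.card F) ^ 2) := by
  have hq : (2 : ℝ) ≤ Fintype.card F := by exact_mod_cast (Fintype.one_lt_card : 1 < Fintype.card F)
  have hj : (Fintype.card F : ℝ) ≤ 8 * Real.exp (⌈√(Fintype.card F)⌉₊ / (16 * Fintype.card F) *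
      ⌈16 * √(Fintype.card F) * Real.log (Fintype.card F)⌉₊) := by
    set q : ℝ := (Fintype.card F : ℝ)
    have hexponent : Real.log q ≤ ⌈√q⌉₊ / (16 * q) * ⌈16 * √q * Real.log q⌉₊ :=
      calc
        Real.log q = √q / (16 * q) * (16 * √q * Real.log q) := by
          field_simp
          rw [Real.sq_sqrt (by positivity)]
        _ ≤ _ := by
          gcongr <;> exact Nat.le_ceil _
    calc
      q = Real.exp (Real.log q) := (Real.exp_log (by linarith)).symm
      _ ≤ Real.exp _ := Real.exp_le_exp.2 hexponent
      _ ≤ 8 * Real.exp _ := le_mul_of_one_le_left (Real.exp_pos _).le (by norm_num)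
  have hweight : Real.exp 1 / Fintype.card F * (Fintype.card F : ℝ) ^ 2 =
      Real.exp 1 * Fintype.card F := by field_simp
  have hweight' : Real.exp 1 / Fintype.card F * (8 * Fintype.card F) = 8 * Real.exp 1 := by
    field_simp
  have hcount := numArcs_mul_pow_le (lam := Real.exp 1 / Fintype.card F) (by positivity)
    (Nat.ceil_le.2 hk) hj
  rw [hweight, hweight'] at hcount
  have hlog : 0 ≤ Real.log (Fintype.card F) := Real.log_nonneg (by linarith)
  exact hcount.trans (container_bound_le_exp hq (Nat.ceil_lt_add_one (by positivity)).le
    (Nat.ceil_lt_add_one (mul_nonneg (by positivity) hlog)).le)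

end CountingArcs

section RandomSubset

variable {F : Type*} [Field F]

lemma exists_arc_card_eq_of_le_maxArc {P : Finset (F × F)} {k : ℕ} (h : k ≤ maxArc F P) :
    ∃ S ⊆ P, #S = k ∧ IsArc F (S : Set (F × F)) := by
  obtain ⟨s, hsP, hcard, hs⟩ :
      maxArc F P ∈ {k | ∃ s : Finset (F × F), s ⊆ P ∧ #s = k ∧ IsArc F (s : Set (F × F))} := by
    refine Nat.sSup_mem ⟨0, ∅, by simp [IsArc]⟩ ⟨#P, ?_⟩
    rintro _ ⟨s, hs, rfl, -⟩
    exact card_le_card hs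
  obtain ⟨S, hSs, hS⟩ := exists_subset_card_eq (h.trans hcard.ge)
  exact ⟨S, hSs.trans hsP, hS, hs.mono_s4 (mod_cast hSs)⟩

variable [Fintype F] {p : ℝ≥0} (hp : p ≤ 1)

instance : IsProbabilityMeasure (randomMeasure F p hp) :=
  inferInstanceAs (IsProbabilityMeasure (Measure.pi _))

lemma randomMeasure_subset_toSubset (S : Finset (F × F)) :
    randomMeasure F p hp {Q | S ⊆ toSubset Q} = (p : ℝ≥0∞) ^ #S := by
  have hpi : {Q : F × F → Bool | S ⊆ toSubset Q} = (S : Set (F × F)).pi fun _ => {true} := by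
    ext Q
    simp [toSubset, Finset.subset_iff]
  rw [hpi, randomMeasure, Measure.pi_pi_finset, prod_const,
    PMF.toMeasure_apply_singleton _ _ (measurableSet_singleton _)]
  rfl

open scoped Classical in
lemma randomMeasure_le_maxArc_le (k : ℕ) :
    randomMeasure F p hp {Q | k ≤ maxArc F (toSubset Q)} ≤ numArcs F k * (p : ℝ≥0∞) ^ k := by
  rw [numArcs_eq_card_filter]
  set arcs : Finset (Finset (F × F)) := {S | #S = k ∧ IsArc F (S : Set (F × F))}
  calc
    _ ≤ randomMeasure F p hp (⋃ S ∈ arcs, {Q | S ⊆ toSubset Q}) := by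
      refine measure_mono fun Q hQ => ?_
      obtain ⟨S, hSQ, hS⟩ := exists_arc_card_eq_of_le_maxArc hQ
      exact Set.mem_biUnion ((mem_filter_univ S).2 hS) hSQ
    _ ≤ ∑ S ∈ arcs, randomMeasure F p hp {Q | S ⊆ toSubset Q} := measure_biUnion_finset_le _ _
    _ = ∑ _S ∈ arcs, (p : ℝ≥0∞) ^ k := sum_congr rfl fun S hS => by
      rw [randomMeasure_subset_toSubset, ((mem_filter_univ S).1 hS).1]
    _ = #arcs * (p : ℝ≥0∞) ^ k := by rw [sum_const, nsmul_eq_mul]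

lemma randomMeasure_lt_maxArc_le (hpq : (p : ℝ) ≤ 1 / Fintype.card F) {x : ℝ}
    (hx : √(Fintype.card F) ≤ x) :
    randomMeasure F p hp {Q | x < maxArc F (toSubset Q)} ≤
      ENNReal.ofReal (Real.exp (100 * √(Fintype.card F) * Real.log (Fintype.card F) ^ 2 - x)) := by
  set E : ℝ := 100 * √(Fintype.card F) * Real.log (Fintype.card F) ^ 2
  set k : ℕ := ⌊x⌋₊ + 1
  have hxk : x < k := by exact_mod_cast Nat.lt_floor_add_one x
  have hreal : (numArcs F k : ℝ) * p ^ k ≤ Real.exp (E - x) :=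
    calc
      (numArcs F k : ℝ) * p ^ k ≤ numArcs F k * (1 / Fintype.card F) ^ k := by gcongr
      _ = numArcs F k * (Real.exp 1 / Fintype.card F) ^ k * Real.exp (-k) := by
        rw [div_pow, div_pow, ← Real.exp_nat_mul, Real.exp_neg, one_pow, mul_one]
        field_simp
      _ ≤ Real.exp E * Real.exp (-k) := by
        gcongr; exact numArcs_mul_exp_one_div_pow_le (hx.trans hxk.le)
      _ = Real.exp (E - k) := by rw [← Real.exp_add, sub_eq_add_neg]
      _ ≤ Real.exp (E - x) := by gcongr
  calc
    randomMeasure F p hp {Q | x < maxArc F (toSubset Q)}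
      ≤ randomMeasure F p hp {Q | k ≤ maxArc F (toSubset Q)} :=
        measure_mono fun Q hQ => (Nat.floor_lt ((Real.sqrt_nonneg _).trans hx)).2 hQ
    _ ≤ numArcs F k * (p : ℝ≥0∞) ^ k := randomMeasure_le_maxArc_le hp k
    _ = ENNReal.ofReal (numArcs F k * p ^ k) := by
      rw [ENNReal.ofReal_mul (by positivity), ENNReal.ofReal_pow (by positivity),
        ENNReal.ofReal_natCast, ENNReal.ofReal_coe_nnreal]
    _ ≤ ENNReal.ofReal (Real.exp (E - x)) := ENNReal.ofReal_le_ofReal hreal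

theorem random_arc_upper_small_p_general (hpq : (p : ℝ) ≤ 1 / Fintype.card F) (x : ℝ) :
    1 - ENNReal.ofReal (Real.exp (100 * √(Fintype.card F) * Real.log (Fintype.card F) ^ 2 - x)) ≤
      randomMeasure F p hp {Q | (maxArc F (toSubset Q) : ℝ) ≤ x} := by
  rcases le_total x (100 * √(Fintype.card F) * Real.log (Fintype.card F) ^ 2) with hx | hx
  · rw [tsub_eq_zero_of_le (ENNReal.one_le_ofReal.2 (Real.one_le_exp (by linarith)))]
    exact zero_le
  have hq : (2 : ℝ) ≤ Fintype.card F := by exact_mod_cast (Fintype.one_lt_card : 1 < Fintype.card F)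
  have hlog : 0.69 ≤ Real.log (Fintype.card F) := by
    linarith [Real.log_two_gt_d9, Real.log_le_log (by norm_num) hq]
  have hsqrt : √(Fintype.card F) ≤ x := by
    refine le_trans ?_ hx
    rw [mul_right_comm]
    exact le_mul_of_one_le_left (Real.sqrt_nonneg _) (by nlinarith)
  have hcompl : {Q : F × F → Bool | x < maxArc F (toSubset Q)}ᶜ =
      {Q | (maxArc F (toSubset Q) : ℝ) ≤ x} := by
    ext Q; simp
  rw [← hcompl, prob_compl_eq_one_sub (Set.toFinite _).measurableSet]
  exact tsub_le_tsub_left (randomMeasure_lt_maxArc_le hp hpq hsqrt) 1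

end RandomSubset

section Asymptotics

open Asymptotics Filter Topology

lemma tendsto_exp_mul_sqrt_mul_sq_log_sub_rpow {a : ℝ} (ha : 1 / 2 < a) (C : ℝ) :
    Tendsto (fun x => Real.exp (C * √x * Real.log x ^ 2 - x ^ a)) atTop (𝓝 0) := by
  have hlog : (fun x => Real.log x ^ 2) =o[atTop] fun x => x ^ (a - 1 / 2) := by
    simpa using isLittleO_log_rpow_rpow_atTop 2 (sub_pos.2 ha)
  have hlittle : (fun x => C * √x * Real.log x ^ 2) =o[atTop] fun x => x ^ a := by
    refine (((isBigO_refl (√·) atTop).mul_isLittleO hlog).const_mul_left C).congr'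
      (.of_forall fun x => (mul_assoc _ _ _).symm) ?_
    filter_upwards [eventually_gt_atTop 0] with x hx
    rw [Real.sqrt_eq_rpow, ← Real.rpow_add hx, add_sub_cancel]
  have hequiv : (fun x => x ^ a - C * √x * Real.log x ^ 2) ~[atTop] fun x => x ^ a :=
    IsEquivalent.refl.sub_isLittleO hlittle
  refine Real.tendsto_exp_comp_nhds_zero.2 ?_
  simpa only [Function.comp_def, neg_sub] using tendsto_neg_atTop_atBot.comp
    (hequiv.symm.tendsto_atTop (tendsto_rpow_atTop (by linarith)))

end Asymptotics

theorem random_arc_upper_small_p :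
    ∀ δ ε : ℝ, 0 < δ → 0 < ε → ∃ q₀ : ℕ,
      ∀ (F : Type) [Field F] [Fintype F], q₀ ≤ Fintype.card F →
      ∀ (p : ℝ≥0) (hp : p ≤ 1), 0 < p → (p : ℝ) < 1 / (Fintype.card F : ℝ) →
      1 - ENNReal.ofReal ε ≤
        randomMeasure F p hp
          {Q | (maxArc F (toSubset Q) : ℝ) ≤
            (Fintype.card F : ℝ) ^ ((1 : ℝ) / 2 + 2 * δ)} := by
  intro δ ε hδ hε
  have hsmall := ((tendsto_exp_mul_sqrt_mul_sq_log_sub_rpow (by linarith : 1 / 2 < 1 / 2 + 2 * δ)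
    100).comp tendsto_natCast_atTop_atTop).eventually_le_const hε
  obtain ⟨q₀, hq₀⟩ := Filter.eventually_atTop.1 hsmall
  exact ⟨q₀, fun F _ _ hF p hp _ hpq =>
    (tsub_le_tsub_left (ENNReal.ofReal_le_ofReal (hq₀ _ hF)) 1).trans
      (random_arc_upper_small_p_general hp hpq.le _)⟩
end
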